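/- Assume βn/k² ≥ 10 and λ_κ > 16‖E‖. Then for every i ∈ [n], ‖Û_{1:κ} Û_{1:κ}ᵀ − Û_{−i,1:κ} Û_{−i,1:κ}ᵀ‖_F ≤ (128‖E‖/λ_κ) · ( √(kκ/(βn)) + ‖Û_{−i,1:κ} Û_{−i,1:κ}ᵀ ε_i‖ / λ_κ ). -/

import Mathlib

open Matrix MeasureTheory ProbabilityTheory
open scoped BigOperators ENNReal NNReal

noncomputable section

/-- Euclidean norm of a vector in `Fin p → ℝ`. -/
def vnorm {p : ℕ} (x : Fin p → ℝ) : ℝ := Real.sqrt (∑ i, (x i) ^ 2)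

/-- Frobenius norm of a real matrix. -/
def fnorm {m n : ℕ} (A : Matrix (Fin m) (Fin n) ℝ) : ℝ :=
  Real.sqrt (∑ i, ∑ j, (A i j) ^ 2)

/-- Operator (spectral) norm of a real matrix. -/
def opnorm {m n : ℕ} (A : Matrix (Fin m) (Fin n) ℝ) : ℝ :=
  ‖LinearMap.toContinuousLinearMap (Matrix.toEuclideanLin A)‖

/-- A (full) singular value decomposition of a real `p × n` matrix `A`:
`A = U D Vᵀ` with `U, V` orthogonal and `D` the rectangular diagonal matrix with the
nonincreasing nonnegative singular values `sv 0 ≥ sv 1 ≥ ⋯` on the diagonal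
(0-indexed, so the math `σ_i` is `sv (i-1)`), extended by zero beyond `min p n`. -/
structure SVDData (p n : ℕ) (A : Matrix (Fin p) (Fin n) ℝ) where
  U : Matrix (Fin p) (Fin p) ℝ
  V : Matrix (Fin n) (Fin n) ℝ
  sv : ℕ → ℝ
  hU : Uᵀ * U = 1
  hV : Vᵀ * V = 1
  sv_anti : ∀ i j : ℕ, i ≤ j → sv j ≤ sv i
  sv_nonneg : ∀ i, 0 ≤ sv i
  sv_zero : ∀ j, min p n ≤ j → sv j = 0
  decomp : A = U * (Matrix.of fun (i : Fin p) (j : Fin n) => if (i : ℕ) = (j : ℕ) then sv (i : ℕ) else 0) * Vᵀ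

/-- Projection matrix `U_{1:r} U_{1:r}ᵀ` onto the span of the first `r` columns of `U`. -/
def projr {p : ℕ} (U : Matrix (Fin p) (Fin p) ℝ) (r : ℕ) : Matrix (Fin p) (Fin p) ℝ :=
  Matrix.of fun i j => ∑ l : Fin p, if (l : ℕ) < r then U i l * U j l else 0

/-- The `l`-th (0-indexed) column of a matrix, as a vector. -/
def matCol {p q : ℕ} (U : Matrix (Fin p) (Fin q) ℝ) (l : ℕ) : Fin p → ℝ :=
  fun i => if h : l < q then U i ⟨l, h⟩ else 0

/-- `β` for a cluster assignment: `(k/n) ·` (size of the smallest cluster),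
so that `β·n/k` is the size of the smallest cluster. -/
def betaMin (n k : ℕ) (z : Fin n → Fin k) : ℝ :=
  ((k : ℝ) / n) * ⨅ a : Fin k, ((Finset.univ.filter fun i => z i = a).card : ℝ)

/-- Minimum pairwise distance between the centers. -/
def Delta {p k : ℕ} (θ : Fin k → Fin p → ℝ) : ℝ :=
  ⨅ q : {q : Fin k × Fin k // q.1 ≠ q.2}, vnorm (fun i => θ q.1.1 i - θ q.1.2 i)

/-- Misclustering error `ℓ(z, z*)`. -/
def miscl {n k : ℕ} (z zs : Fin n → Fin k) : ℝ :=
  (⨅ φ : Equiv.Perm (Fin k), ((Finset.univ.filter fun i => z i ≠ φ (zs i)).card : ℝ)) / n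

/-- `(z, c)` is a global minimizer of the k-means objective for the columns of `W * X`. -/
def IsKMeans {p n k : ℕ} (W : Matrix (Fin p) (Fin p) ℝ) (X : Matrix (Fin p) (Fin n) ℝ)
    (z : Fin n → Fin k) (c : Fin k → Fin p → ℝ) : Prop :=
  ∀ (z' : Fin n → Fin k) (c' : Fin k → Fin p → ℝ),
    ∑ i, ∑ a, (W.mulVec (fun b => X b i) a - c (z i) a) ^ 2 ≤
      ∑ i, ∑ a, (W.mulVec (fun b => X b i) a - c' (z' i) a) ^ 2

/-! Deleting the column `x = X.col i` removes the rank one term `x xᵀ` from `X Xᵀ`.  With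
`R = 1 - Û₋ᵢ Û₋ᵢᵀ`, which commutes with `X₋ᵢ X₋ᵢᵀ`, a left singular vector `u` of `X` with
singular value `s` satisfies `s² R u = X₋ᵢ X₋ᵢᵀ R u + ⟪x, u⟫ R x`.  Weyl's inequality gives
`‖X₋ᵢᵀ R u‖ ≤ ‖E‖ ‖R u‖`, hence `(s² - ‖E‖²) ‖R u‖ ≤ |⟪x, u⟫| ‖R x‖`.  Here `‖R x‖ ≤ 3 ‖E‖`,
because some other column of `X` has the same center `θ` as `x`, and
`|⟪θ, u⟫| √m ≤ ‖Pᵀ u‖ ≤ s + ‖E‖`, because `θ` occurs `m` times among the columns of `P`.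
Summing the squares over `u` bounds the distance by a multiple of `√(κ / m) + ‖Û Ûᵀ ε‖ / λ`, and
replacing `Û` by `Û₋ᵢ` in this bound costs a multiple of the distance that is absorbed on the
left. -/

section Norms

variable {p m n : ℕ}

lemma vnorm_eq_norm_toLp (x : Fin p → ℝ) : vnorm x = ‖WithLp.toLp 2 x‖ := by
  simp [vnorm, EuclideanSpace.norm_eq]

lemma vnorm_nonneg (x : Fin p → ℝ) : 0 ≤ vnorm x := Real.sqrt_nonneg _

lemma vnorm_sq (x : Fin p → ℝ) : vnorm x ^ 2 = ∑ a, x a ^ 2 :=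
  Real.sq_sqrt (Finset.sum_nonneg fun _ _ => sq_nonneg _)

lemma vnorm_sq_eq_dotProduct (x : Fin p → ℝ) : vnorm x ^ 2 = x ⬝ᵥ x := by
  simpa only [dotProduct, ← sq] using vnorm_sq x

lemma vnorm_pos_iff {x : Fin p → ℝ} : 0 < vnorm x ↔ x ≠ 0 := by
  simp [vnorm_eq_norm_toLp]

lemma vnorm_add_le (x y : Fin p → ℝ) : vnorm (x + y) ≤ vnorm x + vnorm y := by
  simpa only [vnorm_eq_norm_toLp, WithLp.toLp_add] using norm_add_le _ _

lemma vnorm_sub_le (x y : Fin p → ℝ) : vnorm (x - y) ≤ vnorm x + vnorm y := by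
  simpa only [vnorm_eq_norm_toLp, WithLp.toLp_sub] using norm_sub_le _ _

lemma abs_apply_le_vnorm (x : Fin p → ℝ) (a : Fin p) : |x a| ≤ vnorm x := by
  rw [vnorm_eq_norm_toLp]
  exact PiLp.norm_apply_le (WithLp.toLp 2 x) a

lemma abs_dotProduct_le_vnorm_mul_vnorm (x y : Fin p → ℝ) : |x ⬝ᵥ y| ≤ vnorm x * vnorm y := by
  simpa only [vnorm_eq_norm_toLp, EuclideanSpace.inner_toLp_toLp, star_trivial, mul_comm,
    dotProduct_comm] using abs_real_inner_le_norm (WithLp.toLp 2 x) (WithLp.toLp 2 y)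

lemma opnorm_nonneg (A : Matrix (Fin m) (Fin n) ℝ) : 0 ≤ opnorm A := norm_nonneg _

open scoped Matrix.Norms.L2Operator in
lemma opnorm_transpose (A : Matrix (Fin m) (Fin n) ℝ) : opnorm Aᵀ = opnorm A :=
  l2_opNorm_conjTranspose A

lemma vnorm_mulVec_le (A : Matrix (Fin m) (Fin n) ℝ) (v : Fin n → ℝ) :
    vnorm (A *ᵥ v) ≤ opnorm A * vnorm v := by
  rw [vnorm_eq_norm_toLp, vnorm_eq_norm_toLp]
  exact (LinearMap.toContinuousLinearMap (Matrix.toEuclideanLin A)).le_opNorm (WithLp.toLp 2 v)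

lemma vnorm_transpose_mulVec_le (A : Matrix (Fin m) (Fin n) ℝ) (v : Fin m → ℝ) :
    vnorm (Aᵀ *ᵥ v) ≤ opnorm A * vnorm v :=
  opnorm_transpose A ▸ vnorm_mulVec_le Aᵀ v

lemma vnorm_col_le (A : Matrix (Fin m) (Fin n) ℝ) (j : Fin n) : vnorm (A.col j) ≤ opnorm A := by
  have h_single : vnorm (Pi.single j 1 : Fin n → ℝ) = 1 := by simp [vnorm_eq_norm_toLp]
  simpa only [mulVec_single_one, h_single, mul_one] using vnorm_mulVec_le A (Pi.single j 1)

lemma fnorm_nonneg (A : Matrix (Fin m) (Fin n) ℝ) : 0 ≤ fnorm A := Real.sqrt_nonneg _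

lemma fnorm_sq (A : Matrix (Fin m) (Fin n) ℝ) : fnorm A ^ 2 = ∑ a, ∑ b, A a b ^ 2 :=
  Real.sq_sqrt (Finset.sum_nonneg fun _ _ => Finset.sum_nonneg fun _ _ => sq_nonneg _)

lemma fnorm_sq_eq_trace (A : Matrix (Fin m) (Fin n) ℝ) : fnorm A ^ 2 = trace (A * Aᵀ) := by
  simp only [fnorm_sq, trace, diag_apply, mul_apply, transpose_apply, ← sq]

lemma vnorm_mulVec_le_fnorm (A : Matrix (Fin m) (Fin n) ℝ) (v : Fin n → ℝ) :
    vnorm (A *ᵥ v) ≤ fnorm A * vnorm v := by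
  refine le_of_sq_le_sq ?_ (mul_nonneg (fnorm_nonneg _) (vnorm_nonneg _))
  rw [mul_pow, fnorm_sq, vnorm_sq, vnorm_sq, Finset.sum_mul]
  exact Finset.sum_le_sum fun a _ => Finset.sum_mul_sq_le_sq_mul_sq Finset.univ (A a) v

lemma vnorm_mulVec_le_add_fnorm_sub_mul (A B : Matrix (Fin m) (Fin n) ℝ) (v : Fin n → ℝ) :
    vnorm (A *ᵥ v) ≤ vnorm (B *ᵥ v) + fnorm (A - B) * vnorm v := by
  have h_add : A *ᵥ v = B *ᵥ v + (A - B) *ᵥ v := by rw [sub_mulVec, add_sub_cancel]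
  rw [h_add]
  exact (vnorm_add_le _ _).trans (by gcongr; exact vnorm_mulVec_le_fnorm _ _)

end Norms

section Projections

variable {p : ℕ} {P Q U W : Matrix (Fin p) (Fin p) ℝ}

lemma transpose_eq_of_isStarProjection {ι R : Type*} [Fintype ι] [NonUnitalNonAssocSemiring R]
    [StarRing R] [TrivialStar R] {Q : Matrix ι ι R} (hQ : IsStarProjection Q) : Qᵀ = Q :=
  (conjTranspose_eq_transpose_of_trivial Q).symm.trans hQ.isSelfAdjoint

lemma vnorm_sq_mulVec_of_isStarProjection (hQ : IsStarProjection Q) (v : Fin p → ℝ) :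
    vnorm (Q *ᵥ v) ^ 2 = v ⬝ᵥ Q *ᵥ v := by
  rw [vnorm_sq_eq_dotProduct, dotProduct_mulVec, ← mulVec_transpose, mulVec_mulVec,
    transpose_eq_of_isStarProjection hQ, hQ.isIdempotentElem.eq, dotProduct_comm]

lemma vnorm_mulVec_le_of_isStarProjection (hQ : IsStarProjection Q) (v : Fin p → ℝ) :
    vnorm (Q *ᵥ v) ≤ vnorm v := by
  have h_sq : vnorm (Q *ᵥ v) ^ 2 ≤ vnorm v * vnorm (Q *ᵥ v) :=
    vnorm_sq_mulVec_of_isStarProjection hQ v ▸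
      (le_abs_self _).trans (abs_dotProduct_le_vnorm_mul_vnorm _ _)
  nlinarith [vnorm_nonneg (Q *ᵥ v), vnorm_nonneg v]

lemma fnorm_sub_sq_of_isStarProjection (hP : IsStarProjection P) (hQ : IsStarProjection Q)
    (htrace : trace P = trace Q) : fnorm (P - Q) ^ 2 = 2 * fnorm ((1 - Q) * P) ^ 2 := by
  have h_sub : trace ((P - Q) * (P - Q)) = trace P - 2 * trace (P * Q) + trace Q := by
    simp only [sub_mul, mul_sub, trace_sub, hP.isIdempotentElem.eq, hQ.isIdempotentElem.eq,
      trace_mul_comm Q P]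
    ring
  have h_compl : trace ((1 - Q) * P * (P * (1 - Q))) = trace P - trace (P * Q) := by
    rw [mul_assoc, ← mul_assoc P P, hP.isIdempotentElem.eq, ← mul_assoc, trace_mul_comm,
      ← mul_assoc, hQ.one_sub.isIdempotentElem.eq, sub_mul, one_mul, trace_sub, trace_mul_comm Q P]
  rw [fnorm_sq_eq_trace, fnorm_sq_eq_trace, transpose_sub, transpose_mul,
    transpose_eq_of_isStarProjection hP, transpose_eq_of_isStarProjection hQ,
    transpose_eq_of_isStarProjection hQ.one_sub, h_sub, h_compl, htrace]
  ring

lemma projr_eq_sum_vecMulVec (U : Matrix (Fin p) (Fin p) ℝ) (r : ℕ) :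
    projr U r = ∑ l : Fin p with l.val < r, vecMulVec (U.col l) (U.col l) := by
  ext a b
  simp only [projr, of_apply, Matrix.sum_apply, vecMulVec_apply, col_apply, Finset.sum_filter]

lemma projr_eq_mul_diagonal_mul (U : Matrix (Fin p) (Fin p) ℝ) (r : ℕ) :
    projr U r = U * diagonal (fun l : Fin p => if (l : ℕ) < r then (1 : ℝ) else 0) * Uᵀ := by
  ext a b
  rw [mul_apply]
  simp only [projr, of_apply, mul_diagonal, transpose_apply, mul_ite, mul_one, mul_zero, ite_mul,
    zero_mul]

lemma conj_diagonal_mul_conj_diagonal {ι R : Type*} [Fintype ι] [DecidableEq ι] [Semiring R]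
    {U : Matrix ι ι R} (hU : Uᵀ * U = 1) (d d' : ι → R) :
    U * diagonal d * Uᵀ * (U * diagonal d' * Uᵀ) = U * diagonal (d * d') * Uᵀ :=
  calc U * diagonal d * Uᵀ * (U * diagonal d' * Uᵀ)
    _ = U * (diagonal d * (Uᵀ * U) * diagonal d') * Uᵀ := by simp only [mul_assoc]
    _ = U * diagonal (d * d') * Uᵀ := by rw [hU, mul_one, diagonal_mul_diagonal]; rfl

lemma isStarProjection_projr (hU : Uᵀ * U = 1) (r : ℕ) : IsStarProjection (projr U r) where
  isIdempotentElem := by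
    rw [IsIdempotentElem, projr_eq_mul_diagonal_mul, conj_diagonal_mul_conj_diagonal hU]
    congr 3
    ext l
    simp
  isSelfAdjoint := by
    ext a b
    simp [projr, star_apply, mul_comm]

lemma trace_projr_eq_trace_projr (hU : Uᵀ * U = 1) (hW : Wᵀ * W = 1) (r : ℕ) :
    trace (projr U r) = trace (projr W r) := by
  rw [projr_eq_mul_diagonal_mul, projr_eq_mul_diagonal_mul, trace_mul_cycle, trace_mul_cycle W,
    hU, hW]

lemma vnorm_sq_eq_sum_col_dotProduct_sq (hU : Uᵀ * U = 1) (v : Fin p → ℝ) :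
    vnorm v ^ 2 = ∑ l, (U.col l ⬝ᵥ v) ^ 2 := by
  have h_self : v ⬝ᵥ v = (Uᵀ *ᵥ v) ⬝ᵥ (Uᵀ *ᵥ v) := by
    rw [dotProduct_mulVec, ← mulVec_transpose, mulVec_mulVec, transpose_transpose,
      mul_eq_one_comm.mp hU, one_mulVec]
  rw [vnorm_sq_eq_dotProduct, h_self, ← vnorm_sq_eq_dotProduct, vnorm_sq]
  rfl

lemma vnorm_col_eq_one (hU : Uᵀ * U = 1) (l : Fin p) : vnorm (U.col l) = 1 := by
  have h_sq : vnorm (U.col l) ^ 2 = 1 := by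
    rw [vnorm_sq_eq_dotProduct]
    exact (congrFun₂ hU l l).trans (one_apply_eq l)
  exact (pow_eq_one_iff_of_nonneg (vnorm_nonneg _) two_ne_zero).mp h_sq

lemma vnorm_projr_mulVec_sq (hU : Uᵀ * U = 1) (r : ℕ) (v : Fin p → ℝ) :
    vnorm (projr U r *ᵥ v) ^ 2 = ∑ l : Fin p with l.val < r, (U.col l ⬝ᵥ v) ^ 2 := by
  rw [vnorm_sq_mulVec_of_isStarProjection (isStarProjection_projr hU r), projr_eq_sum_vecMulVec,
    sum_mulVec, dotProduct_sum]
  refine Finset.sum_congr rfl fun l _ => ?_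
  rw [vecMulVec_mulVec, op_smul_eq_smul, dotProduct_smul, smul_eq_mul, dotProduct_comm v, sq]

lemma fnorm_mul_projr_sq (hU : Uᵀ * U = 1) (R : Matrix (Fin p) (Fin p) ℝ) (r : ℕ) :
    fnorm (R * projr U r) ^ 2 = ∑ l : Fin p with l.val < r, vnorm (R *ᵥ U.col l) ^ 2 := by
  have hproj := isStarProjection_projr hU r
  rw [fnorm_sq_eq_trace, transpose_mul, transpose_eq_of_isStarProjection hproj, mul_assoc,
    ← mul_assoc (projr U r), hproj.isIdempotentElem.eq, projr_eq_sum_vecMulVec, Finset.sum_mul,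
    Finset.mul_sum, trace_sum]
  refine Finset.sum_congr rfl fun l _ => ?_
  rw [vecMulVec_mul, mul_vecMulVec, trace_vecMulVec, vecMul_transpose, vnorm_sq_eq_dotProduct]

lemma fnorm_projr_sub_projr_sq (hU : Uᵀ * U = 1) (hW : Wᵀ * W = 1) (r : ℕ) :
    fnorm (projr U r - projr W r) ^ 2 =
      2 * ∑ l : Fin p with l.val < r, vnorm ((1 - projr W r) *ᵥ U.col l) ^ 2 := by
  rw [fnorm_sub_sq_of_isStarProjection (isStarProjection_projr hU r) (isStarProjection_projr hW r)
    (trace_projr_eq_trace_projr hU hW r), fnorm_mul_projr_sq hU]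

lemma col_dotProduct_one_sub_projr_mulVec (hU : Uᵀ * U = 1) {r : ℕ} {l : Fin p} (hl : l.val < r)
    (v : Fin p → ℝ) : U.col l ⬝ᵥ (1 - projr U r) *ᵥ v = 0 := by
  have h_compl : Uᵀ * (1 - projr U r) =
      (1 - diagonal fun l : Fin p => if (l : ℕ) < r then (1 : ℝ) else 0) * Uᵀ := by
    rw [projr_eq_mul_diagonal_mul, mul_sub, sub_mul, ← mul_assoc, ← mul_assoc, hU, one_mul, mul_one,
      one_mul]
  calc U.col l ⬝ᵥ (1 - projr U r) *ᵥ v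
    _ = ((Uᵀ * (1 - projr U r)) *ᵥ v) l := by rw [← mulVec_mulVec]; rfl
    _ = 0 := by
      rw [h_compl, ← mulVec_mulVec, sub_mulVec, one_mulVec, Pi.sub_apply, mulVec_diagonal,
        if_pos hl, one_mul, sub_self]

end Projections

lemma rectDiagonal_mul_transpose {R : Type*} [Semiring R] {p n : ℕ} {s : ℕ → R}
    (hs : ∀ l, n ≤ l → s l = 0) :
    (of fun (a : Fin p) (b : Fin n) => if (a : ℕ) = b then s a else 0) *
      (of fun (a : Fin p) (b : Fin n) => if (a : ℕ) = b then s a else 0)ᵀ =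
      diagonal fun l : Fin p => s l ^ 2 := by
  ext a b
  simp only [mul_apply, of_apply, transpose_apply, diagonal_apply, ite_mul, zero_mul]
  rcases lt_or_ge (a : ℕ) n with ha | ha
  · have h_single (j : Fin n) : (a : ℕ) = j ↔ (⟨a, ha⟩ : Fin n) = j := by rw [Fin.ext_iff]
    simp only [h_single, Finset.sum_ite_eq, Finset.mem_univ, if_true, mul_ite, mul_zero]
    by_cases hab : a = b
    · rw [if_pos hab, if_pos (congrArg Fin.val hab).symm, ← hab, sq]
    · rw [if_neg hab, if_neg fun h => hab (Fin.ext h.symm)]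
  · simp [hs a ha]

namespace SVDData

variable {p n : ℕ} {A : Matrix (Fin p) (Fin n) ℝ}

lemma mul_transpose_self (D : SVDData p n A) :
    A * Aᵀ = D.U * diagonal (fun l : Fin p => D.sv l ^ 2) * D.Uᵀ := by
  have hA := D.decomp
  set S : Matrix (Fin p) (Fin n) ℝ := of fun a b => if (a : ℕ) = b then D.sv a else 0
  calc A * Aᵀ
    _ = D.U * (S * (D.Vᵀ * D.V) * Sᵀ) * D.Uᵀ := by
      conv_lhs => rw [hA]
      simp only [transpose_mul, transpose_transpose, Matrix.mul_assoc]
    _ = D.U * diagonal (fun l : Fin p => D.sv l ^ 2) * D.Uᵀ := by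
      rw [D.hV, Matrix.mul_one, rectDiagonal_mul_transpose fun l hl => D.sv_zero l (by omega)]

lemma commute_projr_mul_transpose (D : SVDData p n A) (r : ℕ) :
    Commute (projr D.U r) (A * Aᵀ) := by
  rw [Commute, SemiconjBy, projr_eq_mul_diagonal_mul, D.mul_transpose_self,
    conj_diagonal_mul_conj_diagonal D.hU, conj_diagonal_mul_conj_diagonal D.hU, mul_comm]

lemma mul_transpose_mulVec_col (D : SVDData p n A) (l : Fin p) :
    (A * Aᵀ) *ᵥ D.U.col l = D.sv l ^ 2 • D.U.col l := by
  rw [D.mul_transpose_self, ← mulVec_single_one D.U, mulVec_mulVec, mul_assoc, D.hU, mul_one,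
    ← mulVec_mulVec, diagonal_mulVec_single, mul_one, ← mulVec_smul, ← Pi.single_smul',
    smul_eq_mul, mul_one]

lemma vnorm_transpose_mulVec_sq (D : SVDData p n A) (u : Fin p → ℝ) :
    vnorm (Aᵀ *ᵥ u) ^ 2 = ∑ l : Fin p, D.sv l ^ 2 * (D.U.col l ⬝ᵥ u) ^ 2 := by
  have h_gram : vnorm (Aᵀ *ᵥ u) ^ 2 =
      (D.Uᵀ *ᵥ u) ⬝ᵥ diagonal (fun l : Fin p => D.sv l ^ 2) *ᵥ D.Uᵀ *ᵥ u := by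
    rw [vnorm_sq_eq_dotProduct, dotProduct_comm, dotProduct_transpose_mulVec, mulVec_mulVec,
      D.mul_transpose_self, ← mulVec_mulVec, ← mulVec_mulVec, dotProduct_mulVec,
      ← mulVec_transpose]
  rw [h_gram, dotProduct]
  refine Finset.sum_congr rfl fun l _ => ?_
  rw [mulVec_diagonal, sq (D.U.col l ⬝ᵥ u), mul_left_comm]
  rfl

lemma vnorm_transpose_mulVec_col (D : SVDData p n A) (l : Fin p) :
    vnorm (Aᵀ *ᵥ D.U.col l) = D.sv l := by
  refine (sq_eq_sq₀ (vnorm_nonneg _) (D.sv_nonneg _)).mp ?_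
  rw [vnorm_sq_eq_dotProduct, dotProduct_comm, dotProduct_transpose_mulVec, mulVec_mulVec,
    D.mul_transpose_mulVec_col, dotProduct_smul, ← vnorm_sq_eq_dotProduct,
    vnorm_col_eq_one D.hU, one_pow, smul_eq_mul, mul_one]

lemma sv_mul_vnorm_le (D : SVDData p n A) {r : ℕ} {u : Fin p → ℝ}
    (hu : ∀ l : Fin p, r < l → D.U.col l ⬝ᵥ u = 0) : D.sv r * vnorm u ≤ vnorm (Aᵀ *ᵥ u) := by
  refine le_of_sq_le_sq ?_ (vnorm_nonneg _)
  rw [mul_pow, D.vnorm_transpose_mulVec_sq, vnorm_sq_eq_sum_col_dotProduct_sq D.hU, Finset.mul_sum]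
  refine Finset.sum_le_sum fun l _ => ?_
  rcases lt_or_ge r l with hl | hl
  · simp [hu l hl]
  · have := D.sv_nonneg r
    gcongr
    exact D.sv_anti l r hl

lemma vnorm_transpose_mulVec_le_sv_mul (D : SVDData p n A) {r : ℕ} {u : Fin p → ℝ}
    (hu : ∀ l : Fin p, (l : ℕ) < r → D.U.col l ⬝ᵥ u = 0) :
    vnorm (Aᵀ *ᵥ u) ≤ D.sv r * vnorm u := by
  refine le_of_sq_le_sq ?_ (mul_nonneg (D.sv_nonneg _) (vnorm_nonneg _))
  rw [mul_pow, D.vnorm_transpose_mulVec_sq, vnorm_sq_eq_sum_col_dotProduct_sq D.hU, Finset.mul_sum]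
  refine Finset.sum_le_sum fun l _ => ?_
  rcases lt_or_ge (l : ℕ) r with hl | hl
  · simp [hu l hl]
  · have := D.sv_nonneg l
    gcongr
    exact D.sv_anti r l hl

lemma vnorm_transpose_mulVec_one_sub_projr_le (D : SVDData p n A) (r : ℕ) (v : Fin p → ℝ) :
    vnorm (Aᵀ *ᵥ (1 - projr D.U r) *ᵥ v) ≤ D.sv r * vnorm ((1 - projr D.U r) *ᵥ v) :=
  D.vnorm_transpose_mulVec_le_sv_mul fun _ hl => col_dotProduct_one_sub_projr_mulVec D.hU hl v

lemma vnorm_one_sub_projr_mulVec_col_le (D : SVDData p n A) (r : ℕ) (j : Fin n) :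
    vnorm ((1 - projr D.U r) *ᵥ A.col j) ≤ D.sv r := by
  set w := (1 - projr D.U r) *ᵥ A.col j
  have h_sq : vnorm w ^ 2 ≤ D.sv r * vnorm w :=
    calc vnorm w ^ 2
      _ = (Aᵀ *ᵥ w) j :=
        vnorm_sq_mulVec_of_isStarProjection (isStarProjection_projr D.hU r).one_sub _
      _ ≤ vnorm (Aᵀ *ᵥ w) := (le_abs_self _).trans (abs_apply_le_vnorm _ j)
      _ ≤ D.sv r * vnorm w := D.vnorm_transpose_mulVec_one_sub_projr_le r _
  nlinarith [vnorm_nonneg w, D.sv_nonneg r]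

end SVDData

section Weyl

variable {p n m : ℕ}

lemma exists_ne_zero_col_dotProduct_eq_zero {R : Type*} [CommRing R] [IsDomain R]
    (U W : Matrix (Fin p) (Fin p) R) {r : ℕ} (hr : r < p) :
    ∃ u : Fin p → R, u ≠ 0 ∧ (∀ l : Fin p, r < l → U.col l ⬝ᵥ u = 0) ∧
      ∀ l : Fin p, (l : ℕ) < r → W.col l ⬝ᵥ u = 0 := by
  let M : Matrix (Fin p) (Fin p) R :=
    of fun l => if (l : ℕ) < r then W.col l else if r < l then U.col l else 0
  have hdet : M.det = 0 := det_eq_zero_of_row_eq_zero ⟨r, hr⟩ (by simp [M])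
  obtain ⟨u, hu, hMu⟩ := exists_mulVec_eq_zero_iff.mpr hdet
  refine ⟨u, hu, fun l hl => ?_, fun l hl => ?_⟩
  · simpa [mulVec, M, hl, hl.not_gt, col_apply'] using congrFun hMu l
  · simpa [mulVec, M, hl, col_apply'] using congrFun hMu l

-- Weyl's inequality for two matrices that need not have the same number of columns.
lemma SVDData.sv_le_sv_add {A : Matrix (Fin p) (Fin n) ℝ} {B : Matrix (Fin p) (Fin m) ℝ}
    (DA : SVDData p n A) (DB : SVDData p m B) {c : ℝ} (hc : 0 ≤ c)
    (hAB : ∀ u, vnorm (Aᵀ *ᵥ u) ≤ vnorm (Bᵀ *ᵥ u) + c * vnorm u) (r : ℕ) :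
    DA.sv r ≤ DB.sv r + c := by
  rcases lt_or_ge r p with hr | hr
  · obtain ⟨u, hu, hA, hB⟩ := exists_ne_zero_col_dotProduct_eq_zero DA.U DB.U hr
    refine le_of_mul_le_mul_right ?_ (vnorm_pos_iff.mpr hu)
    linarith [DA.sv_mul_vnorm_le hA, DB.vnorm_transpose_mulVec_le_sv_mul hB, hAB u]
  · rw [DA.sv_zero r (by omega)]
    linarith [DB.sv_nonneg r]

end Weyl

section ColumnDeletion

variable {p n : ℕ}

lemma vnorm_transpose_submatrix_succAbove_mulVec_le (A : Matrix (Fin p) (Fin (n + 1)) ℝ)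
    (i : Fin (n + 1)) (u : Fin p → ℝ) :
    vnorm ((A.submatrix id i.succAbove)ᵀ *ᵥ u) ≤ vnorm (Aᵀ *ᵥ u) := by
  refine le_of_sq_le_sq ?_ (vnorm_nonneg _)
  rw [vnorm_sq, vnorm_sq, Fin.sum_univ_succAbove _ i]
  exact le_add_of_nonneg_left (sq_nonneg _)

lemma mul_transpose_eq_submatrix_succAbove_add_vecMulVec {ι R : Type*} [NonUnitalNonAssocSemiring R]
    (A : Matrix ι (Fin (n + 1)) R) (i : Fin (n + 1)) :
    A * Aᵀ = A.submatrix id i.succAbove * (A.submatrix id i.succAbove)ᵀ +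
      vecMulVec (A.col i) (A.col i) := by
  ext a b
  simp [mul_apply, Fin.sum_univ_succAbove _ i, vecMulVec_apply, add_comm]

lemma sub_sq_mul_vnorm_mulVec_le {Y : Matrix (Fin p) (Fin n) ℝ} {R : Matrix (Fin p) (Fin p) ℝ}
    {x u : Fin p → ℝ} {μ t : ℝ} (hR : Commute R (Y * Yᵀ))
    (hu : (Y * Yᵀ + vecMulVec x x) *ᵥ u = μ • u)
    (hY : vnorm (Yᵀ *ᵥ R *ᵥ u) ≤ t * vnorm (R *ᵥ u)) :
    (μ - t ^ 2) * vnorm (R *ᵥ u) ≤ |x ⬝ᵥ u| * vnorm (R *ᵥ x) := by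
  have h_image : μ • R *ᵥ u = Y *ᵥ Yᵀ *ᵥ R *ᵥ u + (x ⬝ᵥ u) • R *ᵥ x := by
    rw [← mulVec_smul, ← hu, add_mulVec, mulVec_add, mulVec_mulVec, hR.eq, vecMulVec_mulVec,
      op_smul_eq_smul, mulVec_smul, mulVec_mulVec, mulVec_mulVec]
  have h_dot : μ * vnorm (R *ᵥ u) ^ 2 =
      vnorm (Yᵀ *ᵥ R *ᵥ u) ^ 2 + (x ⬝ᵥ u) * (R *ᵥ u ⬝ᵥ R *ᵥ x) := by
    have := congrArg (R *ᵥ u ⬝ᵥ ·) h_image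
    simpa only [dotProduct_smul, dotProduct_add, ← dotProduct_transpose_mulVec Y, smul_eq_mul,
      ← vnorm_sq_eq_dotProduct] using this
  have h_cross : (x ⬝ᵥ u) * (R *ᵥ u ⬝ᵥ R *ᵥ x) ≤
      |x ⬝ᵥ u| * (vnorm (R *ᵥ u) * vnorm (R *ᵥ x)) := by
    refine (le_abs_self _).trans ?_
    rw [abs_mul]
    exact mul_le_mul_of_nonneg_left (abs_dotProduct_le_vnorm_mul_vnorm _ _) (abs_nonneg _)
  have h_sq : vnorm (Yᵀ *ᵥ R *ᵥ u) ^ 2 ≤ (t * vnorm (R *ᵥ u)) ^ 2 :=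
    pow_le_pow_left₀ (vnorm_nonneg _) hY 2
  rcases (vnorm_nonneg (R *ᵥ u)).eq_or_lt with h_zero | h_pos
  · rw [← h_zero, mul_zero]
    exact mul_nonneg (abs_nonneg _) (vnorm_nonneg _)
  · refine le_of_mul_le_mul_right ?_ h_pos
    linarith

end ColumnDeletion

section SignalPlusNoise

variable {p n : ℕ}

lemma vnorm_transpose_add_mulVec_le (P E : Matrix (Fin p) (Fin n) ℝ) (u : Fin p → ℝ) :
    vnorm ((P + E)ᵀ *ᵥ u) ≤ vnorm (Pᵀ *ᵥ u) + opnorm E * vnorm u := by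
  rw [transpose_add, add_mulVec]
  exact (vnorm_add_le _ _).trans (by gcongr; exact vnorm_transpose_mulVec_le E u)

lemma vnorm_transpose_mulVec_le_add (P E : Matrix (Fin p) (Fin n) ℝ) (u : Fin p → ℝ) :
    vnorm (Pᵀ *ᵥ u) ≤ vnorm ((P + E)ᵀ *ᵥ u) + opnorm E * vnorm u := by
  have h_sub : Pᵀ *ᵥ u = (P + E)ᵀ *ᵥ u - Eᵀ *ᵥ u := by
    rw [transpose_add, add_mulVec, add_sub_cancel_right]
  rw [h_sub]
  exact (vnorm_sub_le _ _).trans (by gcongr; exact vnorm_transpose_mulVec_le E u)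

lemma card_mul_dotProduct_sq_le_vnorm_sq {A : Matrix (Fin p) (Fin n) ℝ} {S : Finset (Fin n)}
    {θ : Fin p → ℝ} (hS : ∀ j ∈ S, A.col j = θ) (u : Fin p → ℝ) :
    (S.card : ℝ) * (θ ⬝ᵥ u) ^ 2 ≤ vnorm (Aᵀ *ᵥ u) ^ 2 :=
  calc (S.card : ℝ) * (θ ⬝ᵥ u) ^ 2
    _ = ∑ j ∈ S, (A.col j ⬝ᵥ u) ^ 2 := by
      rw [← nsmul_eq_mul, ← Finset.sum_const]
      exact Finset.sum_congr rfl fun j hj => by rw [hS j hj]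
    _ ≤ ∑ j, (A.col j ⬝ᵥ u) ^ 2 :=
      Finset.sum_le_sum_of_subset_of_nonneg (Finset.subset_univ S) fun _ _ _ => sq_nonneg _
    _ = vnorm (Aᵀ *ᵥ u) ^ 2 := (vnorm_sq _).symm

lemma abs_dotProduct_singularVector_le {P E : Matrix (Fin p) (Fin n) ℝ} (DX : SVDData p n (P + E))
    {S : Finset (Fin n)} {θ : Fin p → ℝ} (hS : ∀ j ∈ S, P.col j = θ) (hcard : 0 < S.card)
    (l : Fin p) : |θ ⬝ᵥ DX.U.col l| ≤ (DX.sv l + opnorm E) * (1 / √S.card) := by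
  have h_norm : vnorm (Pᵀ *ᵥ DX.U.col l) ≤ DX.sv l + opnorm E := by
    simpa only [DX.vnorm_transpose_mulVec_col, vnorm_col_eq_one DX.hU, mul_one] using
      vnorm_transpose_mulVec_le_add P E (DX.U.col l)
  have h_sqrt : 0 < √(S.card : ℝ) := Real.sqrt_pos.mpr (Nat.cast_pos.mpr hcard)
  rw [mul_one_div, le_div_iff₀ h_sqrt]
  refine le_trans ?_ h_norm
  refine le_of_sq_le_sq ?_ (vnorm_nonneg _)
  rw [mul_pow, sq_abs, Real.sq_sqrt (Nat.cast_nonneg _), mul_comm]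
  exact card_mul_dotProduct_sq_le_vnorm_sq hS _

end SignalPlusNoise

section Clusters

variable {n k : ℕ}

lemma betaMin_mul_div_le_card (z : Fin n → Fin k) (i : Fin n) :
    betaMin n k z * n / k ≤ (Finset.univ.filter fun j => z j = z i).card := by
  have hn : (n : ℝ) ≠ 0 := Nat.cast_ne_zero.mpr i.pos.ne'
  have hk : (k : ℝ) ≠ 0 := Nat.cast_ne_zero.mpr (z i).pos.ne'
  have h_min : betaMin n k z * n / k =
      ⨅ a : Fin k, ((Finset.univ.filter fun j => z j = a).card : ℝ) := by
    rw [betaMin]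
    field_simp
  rw [h_min]
  exact ciInf_le (Set.finite_range _).bddBelow (z i)

lemma betaMin_mul_div_sq_le_card (z : Fin n → Fin k) (i : Fin n) :
    betaMin n k z * n / (k : ℝ) ^ 2 ≤ (Finset.univ.filter fun j => z j = z i).card := by
  have hk : (1 : ℝ) ≤ k := Nat.one_le_cast.mpr (z i).pos
  rw [sq, ← div_div]
  exact (div_le_div_of_nonneg_right (betaMin_mul_div_le_card z i) (by linarith)).trans
    (div_le_self (Nat.cast_nonneg _) hk)

lemma div_card_le_of_betaMin_mul_pos {z : Fin n → Fin k} (i : Fin n)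
    (hβ : 0 < betaMin n k z * n) {t : ℝ} (ht : 0 ≤ t) :
    t / (Finset.univ.filter fun j => z j = z i).card ≤ k * t / (betaMin n k z * n) := by
  have hk : (0 : ℝ) < k := Nat.cast_pos.mpr (z i).pos
  calc t / (Finset.univ.filter fun j => z j = z i).card
    _ ≤ t / (betaMin n k z * n / k) := by
      gcongr
      exact betaMin_mul_div_le_card z i
    _ = k * t / (betaMin n k z * n) := by rw [div_div_eq_mul_div, mul_comm t]

end Clusters

section LeaveOneOut

variable {p n : ℕ} {P E : Matrix (Fin p) (Fin (n + 1)) ℝ} {i : Fin (n + 1)}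
  (DX : SVDData p (n + 1) (P + E)) (DXi : SVDData p n ((P + E).submatrix id i.succAbove))

lemma sv_submatrix_succAbove_le (DP : SVDData p (n + 1) P) (r : ℕ) :
    DXi.sv r ≤ DP.sv r + opnorm E :=
  DXi.sv_le_sv_add DP (opnorm_nonneg E)
    (fun u => (vnorm_transpose_submatrix_succAbove_mulVec_le _ i u).trans
      (vnorm_transpose_add_mulVec_le P E u)) r

-- `x_i - x_j = ε_i - ε_j`, and `R` nearly kills `x_j`, a column of `X₋ᵢ`.
lemma vnorm_one_sub_projr_mulVec_deleted_col_le {j : Fin (n + 1)} (hji : j ≠ i)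
    (hj : P.col j = P.col i) (r : ℕ) :
    vnorm ((1 - projr DXi.U r) *ᵥ (P + E).col i) ≤ DXi.sv r + 2 * opnorm E := by
  obtain ⟨j', rfl⟩ := Fin.exists_succAbove_eq hji
  have h_col : (P + E).col i =
      ((P + E).submatrix id i.succAbove).col j' + (E.col i - E.col (i.succAbove j')) := by
    ext a
    have h_center := congrFun hj a
    simp only [col_apply, Matrix.add_apply, submatrix_apply, id_eq, Pi.add_apply,
      Pi.sub_apply] at h_center ⊢
    linarith
  have h_noise := (vnorm_mulVec_le_of_isStarProjection (isStarProjection_projr DXi.hU r).one_sub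
    (E.col i - E.col (i.succAbove j'))).trans (vnorm_sub_le _ _)
  rw [h_col, mulVec_add]
  linarith [vnorm_add_le ((1 - projr DXi.U r) *ᵥ ((P + E).submatrix id i.succAbove).col j')
      ((1 - projr DXi.U r) *ᵥ (E.col i - E.col (i.succAbove j'))),
    DXi.vnorm_one_sub_projr_mulVec_col_le r j', vnorm_col_le E i,
    vnorm_col_le E (i.succAbove j')]

lemma sv_sq_sub_sq_mul_vnorm_le {t : ℝ} (r : ℕ) (ht : DXi.sv r ≤ t) (l : Fin p) :
    (DX.sv l ^ 2 - t ^ 2) * vnorm ((1 - projr DXi.U r) *ᵥ DX.U.col l) ≤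
      |(P + E).col i ⬝ᵥ DX.U.col l| * vnorm ((1 - projr DXi.U r) *ᵥ (P + E).col i) := by
  refine sub_sq_mul_vnorm_mulVec_le
    ((Commute.one_left _).sub_left (DXi.commute_projr_mul_transpose r)) ?_ ?_
  · rw [← mul_transpose_eq_submatrix_succAbove_add_vecMulVec, DX.mul_transpose_mulVec_col]
  · refine (DXi.vnorm_transpose_mulVec_one_sub_projr_le r _).trans ?_
    exact mul_le_mul_of_nonneg_right ht (vnorm_nonneg _)

end LeaveOneOut

lemma mul_le_two_mul_of_spectral_gap {e lam s v a b c w : ℝ} (he : 0 ≤ e) (hgap : 4 * e < lam)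
    (hs : lam ≤ s + e) (hv : 0 ≤ v) (hb : 0 ≤ b) (hc : 0 ≤ c) (ha : a ≤ (s + e) * w + c)
    (hw : 0 ≤ w) (h : (s ^ 2 - e ^ 2) * v ≤ a * b) : lam * v ≤ 2 * b * (w + c / lam) := by
  have h_lam : 0 < lam := by linarith
  have hs_pos : 0 < s := by linarith
  have h_gap_sq : 8 / 9 * s ^ 2 ≤ s ^ 2 - e ^ 2 := by nlinarith
  have h_c : c ≤ 4 / 3 * s * (c / lam) := by
    rw [← mul_div_assoc, le_div_iff₀ h_lam, mul_comm]
    exact mul_le_mul_of_nonneg_right (by linarith) hc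
  have h_a : a ≤ 4 / 3 * s * (w + c / lam) := by nlinarith
  have h_main : s * (2 / 3 * s * v) ≤ s * (b * (w + c / lam)) := by
    nlinarith [mul_le_mul_of_nonneg_right h_gap_sq hv, mul_le_mul_of_nonneg_right h_a hb]
  have h_cancel := le_of_mul_le_mul_left h_main hs_pos
  nlinarith [mul_le_mul_of_nonneg_right (show lam ≤ 4 / 3 * s by linarith) hv]

-- The term `T * e` produced by the bound on `q` has total coefficient `12 * (e / lam) ^ 2 ≤ 3 / 4`.
lemma le_of_le_add_self_mul {T e lam s q v : ℝ} (hT : 0 ≤ T) (he : 0 ≤ e) (hgap : 4 * e < lam)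
    (hq : q ≤ v + T * e) (h : T ≤ 12 * (e / lam) * (s + q / lam)) :
    T ≤ 48 * (e / lam) * (s + v / lam) := by
  have h_lam : 0 < lam := by linarith
  have h_ratio : 0 ≤ e / lam := by positivity
  have h_ratio_le : e / lam ≤ 1 / 4 := by rw [div_le_iff₀ h_lam]; linarith
  have h_q : q / lam ≤ v / lam + T * (e / lam) := by
    rw [← mul_div_assoc, ← add_div]
    gcongr
  have h_absorb : e / lam * (e / lam) * T ≤ 1 / 4 * (1 / 4) * T := by gcongr
  nlinarith [mul_le_mul_of_nonneg_left h_q h_ratio]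

section MainBound

variable {p n : ℕ} {P E : Matrix (Fin p) (Fin (n + 1)) ℝ} {i : Fin (n + 1)}
  {S : Finset (Fin (n + 1))} {κ : ℕ} {lam : ℝ} (DX : SVDData p (n + 1) (P + E))
  (DXi : SVDData p n ((P + E).submatrix id i.succAbove))

lemma vnorm_one_sub_projr_mulVec_singularVector_le (hS : ∀ j ∈ S, P.col j = P.col i)
    (hcard : 2 ≤ S.card) (hgap : 4 * opnorm E < lam) (ht : DXi.sv κ ≤ opnorm E) {l : Fin p}
    (hs : lam ≤ DX.sv l + opnorm E) :
    vnorm ((1 - projr DXi.U κ) *ᵥ DX.U.col l) ≤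
      6 * (opnorm E / lam) * (1 / √S.card + |DX.U.col l ⬝ᵥ E.col i| / lam) := by
  have he := opnorm_nonneg E
  have h_lam : 0 < lam := by linarith
  obtain ⟨j, hjS, hji⟩ := Finset.exists_mem_ne hcard i
  have h_deleted : vnorm ((1 - projr DXi.U κ) *ᵥ (P + E).col i) ≤ 3 * opnorm E := by
    linarith [vnorm_one_sub_projr_mulVec_deleted_col_le DXi hji (hS j hjS) κ]
  have h_dot : |(P + E).col i ⬝ᵥ DX.U.col l| ≤
      (DX.sv l + opnorm E) * (1 / √S.card) + |DX.U.col l ⬝ᵥ E.col i| := by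
    have h_col : (P + E).col i = P.col i + E.col i := rfl
    rw [h_col, add_dotProduct, dotProduct_comm (DX.U.col l)]
    refine (abs_add_le _ _).trans ?_
    gcongr
    exact abs_dotProduct_singularVector_le DX hS (by omega) l
  calc vnorm ((1 - projr DXi.U κ) *ᵥ DX.U.col l)
    _ ≤ 2 * (3 * opnorm E) * (1 / √S.card + |DX.U.col l ⬝ᵥ E.col i| / lam) / lam := by
      rw [le_div_iff₀ h_lam, mul_comm]
      refine (mul_le_two_mul_of_spectral_gap he hgap hs (vnorm_nonneg _) (vnorm_nonneg _)
        (abs_nonneg _) h_dot (by positivity) (sv_sq_sub_sq_mul_vnorm_le DX DXi κ ht l)).trans ?_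
      gcongr
    _ = 6 * (opnorm E / lam) * (1 / √S.card + |DX.U.col l ⬝ᵥ E.col i| / lam) := by ring

lemma vnorm_one_sub_projr_mulVec_singularVector_sq_le (hS : ∀ j ∈ S, P.col j = P.col i)
    (hcard : 2 ≤ S.card) (hgap : 4 * opnorm E < lam) (ht : DXi.sv κ ≤ opnorm E) {l : Fin p}
    (hs : lam ≤ DX.sv l + opnorm E) :
    vnorm ((1 - projr DXi.U κ) *ᵥ DX.U.col l) ^ 2 ≤
      72 * (opnorm E / lam) ^ 2 * (1 / S.card + (DX.U.col l ⬝ᵥ E.col i) ^ 2 / lam ^ 2) :=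
  calc vnorm ((1 - projr DXi.U κ) *ᵥ DX.U.col l) ^ 2
    _ ≤ (6 * (opnorm E / lam) * (1 / √S.card + |DX.U.col l ⬝ᵥ E.col i| / lam)) ^ 2 :=
      pow_le_pow_left₀ (vnorm_nonneg _)
        (vnorm_one_sub_projr_mulVec_singularVector_le DX DXi hS hcard hgap ht hs) 2
    _ = 36 * (opnorm E / lam) ^ 2 * (1 / √S.card + |DX.U.col l ⬝ᵥ E.col i| / lam) ^ 2 := by ring
    _ ≤ 36 * (opnorm E / lam) ^ 2 *
          (2 * ((1 / √S.card) ^ 2 + (|DX.U.col l ⬝ᵥ E.col i| / lam) ^ 2)) := by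
      gcongr
      exact add_sq_le
    _ = 72 * (opnorm E / lam) ^ 2 * (1 / S.card + (DX.U.col l ⬝ᵥ E.col i) ^ 2 / lam ^ 2) := by
      rw [div_pow 1, div_pow |_|, one_pow, Real.sq_sqrt (Nat.cast_nonneg _), sq_abs]
      ring

lemma fnorm_projr_sub_projr_le (hS : ∀ j ∈ S, P.col j = P.col i) (hcard : 2 ≤ S.card)
    (hgap : 4 * opnorm E < lam) (ht : DXi.sv κ ≤ opnorm E)
    (hs : ∀ l : Fin p, l.val < κ → lam ≤ DX.sv l + opnorm E) :
    fnorm (projr DX.U κ - projr DXi.U κ) ≤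
      12 * (opnorm E / lam) * (√(κ / S.card) + vnorm (projr DX.U κ *ᵥ E.col i) / lam) := by
  have he := opnorm_nonneg E
  have h_lam : 0 < lam := by linarith
  set q := vnorm (projr DX.U κ *ᵥ E.col i) with hq
  have hq_nonneg : 0 ≤ q := vnorm_nonneg _
  have h_card : ((Finset.univ.filter fun l : Fin p => l.val < κ).card : ℝ) ≤ κ := by
    rw [Fin.card_filter_val_lt]
    exact_mod_cast min_le_right p κ
  refine le_of_sq_le_sq ?_ (by positivity)
  calc fnorm (projr DX.U κ - projr DXi.U κ) ^ 2
    _ = 2 * ∑ l : Fin p with l.val < κ, vnorm ((1 - projr DXi.U κ) *ᵥ DX.U.col l) ^ 2 :=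
      fnorm_projr_sub_projr_sq DX.hU DXi.hU κ
    _ ≤ 2 * ∑ l : Fin p with l.val < κ, 72 * (opnorm E / lam) ^ 2 *
          (1 / S.card + (DX.U.col l ⬝ᵥ E.col i) ^ 2 / lam ^ 2) := by
      gcongr with l hl
      exact vnorm_one_sub_projr_mulVec_singularVector_sq_le DX DXi hS hcard hgap ht
        (hs l (Finset.mem_filter.mp hl).2)
    _ = 144 * (opnorm E / lam) ^ 2 * ((Finset.univ.filter fun l : Fin p => l.val < κ).card *
          (1 / S.card) + q ^ 2 / lam ^ 2) := by
      rw [← Finset.mul_sum, Finset.sum_add_distrib, Finset.sum_const, nsmul_eq_mul,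
        ← Finset.sum_div, hq, vnorm_projr_mulVec_sq DX.hU]
      ring
    _ ≤ 144 * (opnorm E / lam) ^ 2 * (κ * (1 / S.card) + q ^ 2 / lam ^ 2) := by gcongr
    _ = 144 * (opnorm E / lam) ^ 2 * (√(κ / S.card) ^ 2 + (q / lam) ^ 2) := by
      rw [Real.sq_sqrt (by positivity), div_pow q, mul_one_div]
    _ ≤ 144 * (opnorm E / lam) ^ 2 * (√(κ / S.card) + q / lam) ^ 2 := by
      gcongr
      exact pow_add_pow_le (Real.sqrt_nonneg _) (by positivity) two_ne_zero
    _ = (12 * (opnorm E / lam) * (√(κ / S.card) + q / lam)) ^ 2 := by ring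

end MainBound

theorem mixture_perturbation_general {p n κ : ℕ} {P E : Matrix (Fin p) (Fin (n + 1)) ℝ}
    {i : Fin (n + 1)} {S : Finset (Fin (n + 1))} (hS : ∀ j ∈ S, P.col j = P.col i)
    (hcard : 2 ≤ S.card) (DP : SVDData p (n + 1) P) (hrank : DP.sv κ = 0)
    (hgap : 4 * opnorm E < DP.sv (κ - 1)) (DX : SVDData p (n + 1) (P + E))
    (DXi : SVDData p n ((P + E).submatrix id i.succAbove)) :
    fnorm (projr DX.U κ - projr DXi.U κ) ≤
      48 * (opnorm E / DP.sv (κ - 1)) *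
        (√(κ / S.card) + vnorm (projr DXi.U κ *ᵥ E.col i) / DP.sv (κ - 1)) := by
  have ht : DXi.sv κ ≤ opnorm E := by simpa [hrank] using sv_submatrix_succAbove_le DXi DP κ
  have hs (l : Fin p) (hl : l.val < κ) : DP.sv (κ - 1) ≤ DX.sv l + opnorm E :=
    (DP.sv_anti l (κ - 1) (by omega)).trans
      (DP.sv_le_sv_add DX (opnorm_nonneg E) (vnorm_transpose_mulVec_le_add P E) l)
  have h_noise : vnorm (projr DX.U κ *ᵥ E.col i) ≤ vnorm (projr DXi.U κ *ᵥ E.col i) +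
      fnorm (projr DX.U κ - projr DXi.U κ) * opnorm E :=
    (vnorm_mulVec_le_add_fnorm_sub_mul _ (projr DXi.U κ) _).trans
      (by gcongr; exacts [fnorm_nonneg _, vnorm_col_le E i])
  exact le_of_le_add_self_mul (fnorm_nonneg _) (opnorm_nonneg E) hgap h_noise
    (fnorm_projr_sub_projr_le DX DXi hS hcard hgap ht hs)

/-- **Theorem 2 (singular subspace perturbation in mixture models).**
Mixture model `X = P + E`, `P` with columns `θ_{z j}`, `κ = rank P` (`λ_κ > 0`, `λ_{κ+1} = 0`).
Assume `βn/k² ≥ 10` and `ρ₀ := λ_κ/‖E‖ > 16`.  Then for every `i`,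
`‖Û_{1:κ}Û_{1:κ}ᵀ − Û_{−i,1:κ}Û_{−i,1:κ}ᵀ‖_F ≤ (128/ρ₀)(√(kκ/(βn)) + ‖Û_{−i,1:κ}Û_{−i,1:κ}ᵀ ε_i‖/λ_κ)`. -/
theorem mixture_perturbation
    (p n k : ℕ) (z : Fin (n + 1) → Fin k) (θ : Fin k → Fin p → ℝ)
    (Pm E X : Matrix (Fin p) (Fin (n + 1)) ℝ)
    (hP : ∀ a j, Pm a j = θ (z j) a) (hX : X = Pm + E)
    (κ : ℕ) (hκ0 : 0 < κ) (hκk : κ ≤ k)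
    (DP : SVDData p (n + 1) Pm)
    (hrank_pos : 0 < DP.sv (κ - 1)) (hrank_zero : DP.sv κ = 0)
    (hβ : 10 ≤ betaMin (n + 1) k z * ((n : ℝ) + 1) / (k : ℝ) ^ 2)
    (hgap : 16 < DP.sv (κ - 1) / opnorm E)
    (DX : SVDData p (n + 1) X) (i : Fin (n + 1))
    (DXi : SVDData p n (X.submatrix id i.succAbove)) :
    fnorm (projr DX.U κ - projr DXi.U κ) ≤
      128 / (DP.sv (κ - 1) / opnorm E) *
        (Real.sqrt ((k : ℝ) * κ / (betaMin (n + 1) k z * ((n : ℝ) + 1))) +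
          vnorm ((projr DXi.U κ).mulVec fun a => E a i) / DP.sv (κ - 1)) := by
  subst hX
  rw [← Nat.cast_add_one] at hβ ⊢
  have h_card : 2 ≤ (Finset.univ.filter fun j => z j = z i).card := by
    rify
    linarith [betaMin_mul_div_sq_le_card z i]
  have h_size : 0 < betaMin (n + 1) k z * (n + 1 : ℕ) :=
    pos_of_mul_pos_left (lt_of_lt_of_le (by norm_num) hβ) (by positivity)
  have h_gap : 16 * opnorm E < DP.sv (κ - 1) := by
    have h_ne : opnorm E ≠ 0 := fun h => by norm_num [h] at hgap
    exact (lt_div_iff₀ ((opnorm_nonneg E).lt_of_ne' h_ne)).mp hgap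
  have h_center (j) (hj : j ∈ Finset.univ.filter fun j => z j = z i) : Pm.col j = Pm.col i := by
    ext a
    rw [col_apply, col_apply, hP, hP, (Finset.mem_filter.mp hj).2]
  have h_ratio := div_nonneg (opnorm_nonneg E) hrank_pos.le
  have h_vec := vnorm_nonneg (projr DXi.U κ *ᵥ E.col i)
  refine (mixture_perturbation_general h_center h_card DP hrank_zero
    (by linarith [opnorm_nonneg E]) DX DXi).trans ?_
  rw [← mul_one_div 128, one_div_div]
  refine mul_le_mul (by linarith) ?_ (by positivity) (by positivity)
  refine add_le_add_left (Real.sqrt_le_sqrt ?_) _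
  exact div_card_le_of_betaMin_mul_pos i h_size (Nat.cast_nonneg κ)
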